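/- For all n ≥ 4, the number of permutations of [n] containing exactly two occurrences of the pattern 123 equals (59n² + 117n + 100)·(2n−2)!/((n+5)!·(n−4)!). -/

import Mathlib

/-!
Permutations are built one entry at a time: a permutation of `Fin (n + 1)` is uniquely obtained
from one of `Fin n` by appending a last entry of value `v` and raising the entries that are at
least `v` (`app_bijective`). The new occurrences of 123 are the old pairs `i < j` with
`π i < π j < v`; their number is `prof π v`, and `prof` is nondecreasing in `v` and transforms under
insertion by the rule `ins` (`occ_app`, `prof_app`).

Only the values of `v` with `prof π v ≤ 2` matter, so the profile is recorded by its label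
`(a, b, c)`, the numbers of `v` with profile `0`, `1`, `2`. The insertions act on labels as follows.

* No new occurrence: `(a, b, c)` becomes `(a + 1, b, c)`, `(2, a - 1, b)`, `(3, 0, a - 2)` or
  `(j + 1, 0, 0)` with `3 ≤ j < a`.
* One new occurrence: `(a, t, 0)` with `1 ≤ t ≤ b`.
* Two new occurrences: `(a, b, t)` with `1 ≤ t ≤ c`.

The number of extensions creating `0`, `1`, `2` further occurrences is therefore, respectively,
independent of `b` and `c`, affine in `b`, and a combination of `1`, `b`, `b (b + 1) / 2` and `c`
(`cnt_two`, `cnt_one`, `cnt_zero`). The coefficients depend on `a` only, and their generating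
functions satisfy linear recurrences in `a` whose homogeneous solutions are the powers of the
Catalan series `C`, because `C^a - C^(a-1) = x C^(a+1)`. They are solved explicitly; starting from the
one-element permutation, of label `(2, 0, 0)`, the count for `n` is the coefficient of `x^(n-1)` in
`C^6 - 2 C^5 + C^4 - C^3 + 2 C^2 - C` (`serA_two`), and the closed form of the coefficients of
`C^j` (`coeff_catC_pow`) gives the formula.
-/

/-- The number of occurrences of the pattern `τ` (a permutation of `Fin k`) in the
permutation `π` of `Fin n`. -/
noncomputable def numOcc {k n : ℕ} (τ : Equiv.Perm (Fin k)) (π : Equiv.Perm (Fin n)) : ℕ :=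
  Nat.card {f : Fin k → Fin n // StrictMono f ∧ ∀ a b : Fin k, π (f a) < π (f b) ↔ τ a < τ b}

open PowerSeries

/-! ### Powers of the Catalan series -/

/-- The Catalan generating function `C(x)`, with rational coefficients. -/
noncomputable def catC : PowerSeries ℚ := PowerSeries.map (Nat.castRingHom ℚ) catalanSeries

lemma catC_eq : catC = 1 + X * catC ^ 2 := by
  have h := congrArg (PowerSeries.map (Nat.castRingHom ℚ)) catalanSeries_sq_mul_X_add_one
  simp only [map_add, map_mul, map_pow, map_one, PowerSeries.map_X] at h
  unfold catC
  linear_combination -h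

lemma coeff_catC_pow_succ (N k : ℕ) : coeff (N + 1) (catC ^ (k + 1)) =
    coeff (N + 1) (catC ^ k) + coeff N (catC ^ (k + 2)) := by
  rw [← coeff_succ_X_mul N, ← map_add]
  congr 1
  linear_combination catC ^ k * catC_eq

lemma coeff_zero_catC_pow (k : ℕ) : coeff 0 (catC ^ k) = 1 := by
  have h : constantCoeff catC = 1 := by
    rw [catC_eq]; simp
  simp [h]

/-- The ballot numbers: `[x^N] C^j = j (2N+j-1)! / (N! (N+j)!)`, here with `j = k + 1`.
The relation `C^(k+1) = C^k + x C^(k+2)` drives the induction. -/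
lemma coeff_catC_pow (N k : ℕ) : coeff N (catC ^ (k + 1)) =
    (k + 1) * (2 * N + k).factorial / (N.factorial * (N + k + 1).factorial : ℚ) := by
  induction N generalizing k with
  | zero =>
    rw [coeff_zero_catC_pow]
    have := Nat.factorial_ne_zero k
    simp [Nat.factorial_succ]
    field_simp
  | succ N ih =>
    induction k with
    | zero =>
      rw [coeff_catC_pow_succ, ih]
      have h1 : coeff (N + 1) (catC ^ 0) = 0 := by simp [coeff_one]
      rw [h1]
      have := Nat.factorial_ne_zero N
      have := Nat.factorial_ne_zero (2 * N + 1)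
      simp [Nat.factorial_succ, Nat.mul_add]
      field_simp
      ring
    | succ k ihk =>
      rw [coeff_catC_pow_succ, ih, ihk]
      have e1 : 2 * (N + 1) + k = (2 * N + k) + 2 := by ring
      have e2 : 2 * (N + 1) + (k + 1) = (2 * N + k) + 3 := by ring
      have e3 : 2 * N + (k + 1 + 1) = (2 * N + k) + 2 := by ring
      have e4 : N + 1 + (k + 1) + 1 = (N + k) + 3 := by ring
      have e5 : N + 1 + k + 1 = (N + k) + 2 := by ring
      have e7 : N + (k + 1 + 1) + 1 = (N + k) + 3 := by ring
      simp only [e1, e2, e3, e4, e5, e7]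
      have := Nat.factorial_ne_zero N
      have := Nat.factorial_ne_zero (N + k)
      simp only [Nat.factorial_succ]
      push_cast
      field_simp
      ring

/-! ### The generating functions and their recurrences -/

/-- The generating function, by number of insertions, of the ways to extend a permutation of label
`(a, b, c)` without creating any occurrence of 123. -/
noncomputable def F0 (a : ℕ) : PowerSeries ℚ := catC ^ a

/-- The generating function of the coefficient of `b` in the number of extensions creating exactly
one occurrence; also that of the coefficient of `c` when exactly two occurrences are created. -/
noncomputable def serH (a : ℕ) : PowerSeries ℚ := X * catC ^ (a + 1)

/-- The generating function of the coefficient of `b (b + 1) / 2` in the number of extensions creating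
exactly two occurrences. -/
noncomputable def serD (a : ℕ) : PowerSeries ℚ := X ^ 2 * catC ^ (a + 2)

/-- The generating function of the number of extensions of a permutation of label `(a, 0, 0)` creating
exactly one occurrence. -/
noncomputable def serG (a : ℕ) : PowerSeries ℚ := (X - X ^ 2) * catC ^ (a + 3) - X * catC ^ 3

/-- The generating function of the coefficient of `b` in the number of extensions creating exactly two
occurrences, once the multiple of `b (b + 1) / 2` has been split off. -/
noncomputable def serB (a : ℕ) : PowerSeries ℚ := X ^ 2 * (1 - X) * catC ^ (a + 4)

/-- The coefficient of `a` in the particular affine solution `serAα + a * serAβ` of the recurrence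
`serA_rec`. -/
noncomputable def serAβ : PowerSeries ℚ := - X ^ 2 * catC ^ 4

/-- The constant term of the particular affine solution `serAα + a * serAβ` of the recurrence
`serA_rec`. -/
noncomputable def serAα : PowerSeries ℚ :=
  - 2 * X * catC ^ 4 + 2 * X ^ 2 * catC ^ 4 - X ^ 2 * (1 - X) * catC ^ 6

/-- The coefficient of the homogeneous solution `C^a` of `serA_rec`, forced by the case `a = 2`. -/
noncomputable def serAκ : PowerSeries ℚ :=
  X * serAα + 2 * X * serAβ - serAα - serAβ - X ^ 2 * catC ^ 4

/-- The generating function of the number of extensions of a permutation of label `(a, 0, 0)` creating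
exactly two occurrences. -/
noncomputable def serA (a : ℕ) : PowerSeries ℚ :=
  serAκ * catC ^ a + serAα + (a : PowerSeries ℚ) * serAβ

lemma F0_rec (m : ℕ) : F0 (m + 2) =
    1 + X * (F0 (m + 3) + F0 2 + ∑ v ∈ Finset.range m, F0 (v + 3)) := by
  induction m with
  | zero =>
    simp only [F0, Finset.sum_range_zero]
    linear_combination (catC + 1) * catC_eq
  | succ m ih =>
    rw [Finset.sum_range_succ]
    simp only [F0] at *
    linear_combination ih + catC ^ (m + 2) * catC_eq

lemma serH_rec (a : ℕ) : serH a = X * (serH (a + 1) + F0 a) := by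
  simp only [F0, serH]
  linear_combination X * catC ^ a * catC_eq

lemma serD_rec (a : ℕ) : serD a = X * (serD (a + 1) + serH a) := by
  simp only [serD, serH]
  linear_combination X ^ 2 * catC ^ (a + 1) * catC_eq

lemma serG_rec (m : ℕ) : serG (m + 2) =
    X * (serG (m + 3) + (serG 2 + ((m : PowerSeries ℚ) + 1) * serH 2)
      + ∑ v ∈ Finset.range m, serG (v + 3)) := by
  induction m with
  | zero =>
    simp only [serG, serH, Finset.sum_range_zero, Nat.cast_zero]
    linear_combination (X - X ^ 2) * (catC ^ 4 + catC ^ 3) * catC_eq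
  | succ m ih =>
    rw [Finset.sum_range_succ]
    simp only [serG, serH, Nat.cast_add, Nat.cast_one] at *
    linear_combination ih + (X - X ^ 2) * catC ^ (m + 5) * catC_eq

lemma serB_rec (a : ℕ) : serB a = X * (serB (a + 1) + serH 2 + serG a) := by
  simp only [serB, serH, serG]
  linear_combination X ^ 2 * (1 - X) * catC ^ (a + 3) * catC_eq

lemma serA_rec (m : ℕ) : serA (m + 2) =
    X * (serA (m + 3) + (serA 2 + ((m : PowerSeries ℚ) + 1) * serB 2
        + C ((m + 1) * (m + 2) / 2 : ℚ) * serD 2)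
      + (∑ v ∈ Finset.range m, serA (v + 3) + (m : PowerSeries ℚ) * serH 3)) := by
  induction m with
  | zero =>
    simp only [serA, serB, serH, serD, Finset.sum_range_zero, Nat.cast_zero, Nat.cast_ofNat, Nat.cast_add]
    norm_num
    have hκ : serAκ = X * serAα + 2 * X * serAβ - serAα - serAβ - X ^ 2 * catC ^ 4 := rfl
    have hα : serAα =   - 2 * X * catC ^ 4 + 2 * X ^ 2 * catC ^ 4 - X ^ 2 * (1 - X) * catC ^ 6 := rfl
    have hβ : serAβ = - X ^ 2 * catC ^ 4 := rfl
    linear_combination serAκ * (catC + 1) * catC_eq + hκ - X * hα + (1 - 2 * X) * hβ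
      - X * hβ
  | succ m ih =>
    rw [Finset.sum_range_succ]
    have hC : (C (((m + 1 : ℕ) + 1) * ((m + 1 : ℕ) + 2) / 2 : ℚ) : PowerSeries ℚ) =
       C ((m + 1) * (m + 2) / 2 : ℚ) + (m + 2) := by
      have : (m + 2 : PowerSeries ℚ) = C (m + 2 : ℚ) := by simp [map_ofNat C 2]
      rw [this, ← map_add]; congr 1; push_cast; ring
    rw [hC]
    generalize (C ((m + 1) * (m + 2) / 2 : ℚ) : PowerSeries ℚ) = w at *
    simp only [serA, serB, serH, serD, Nat.cast_add, Nat.cast_one, Nat.cast_ofNat] at *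
    have hα : serAα =   - 2 * X * catC ^ 4 + 2 * X ^ 2 * catC ^ 4 - X ^ 2 * (1 - X) * catC ^ 6 := rfl
    have hβ : serAβ = - X ^ 2 * catC ^ 4 := rfl
    linear_combination ih + serAκ * catC ^ (m + 2) * catC_eq - X * hα + (1 - (m + 4) * X) * hβ

/-- The powers of `x` can be eliminated by means of `x C^2 = C - 1`; the multiplier of `catC_eq` below
is the quotient of that polynomial division. -/
lemma serA_two : serA 2 = catC ^ 6 - 2 * catC ^ 5 + catC ^ 4 - catC ^ 3 + 2 * catC ^ 2 - catC := by
  simp only [serA, serAκ, serAα, serAβ, Nat.cast_ofNat]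
  linear_combination -(X ^ 3 * catC ^ 6 - 2 * X ^ 2 * catC ^ 6 + X ^ 2 * catC ^ 5 + X * catC ^ 6
    - 2 * X * catC ^ 5 - 2 * X * catC ^ 4 - X * catC ^ 3 + catC ^ 5 - catC ^ 4 - catC ^ 2
    + catC) * catC_eq

lemma coeff_natCast_mul (s a : ℕ) (f : PowerSeries ℚ) :
    coeff s ((a : PowerSeries ℚ) * f) = a * coeff s f := by
  rw [← map_natCast (C (R := ℚ)), coeff_C_mul]

lemma coeff_serA_two (N : ℕ) : coeff (N + 3) (serA 2) =
    (59 * (N + 4 : ℚ) ^ 2 + 117 * (N + 4) + 100) * (2 * N + 6).factorial /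
      ((N + 9).factorial * N.factorial) := by
  have h1 : serA 2 = catC ^ (5 + 1) - (catC ^ (4 + 1) + catC ^ (4 + 1)) + catC ^ (3 + 1)
      - catC ^ (2 + 1) + (catC ^ (1 + 1) + catC ^ (1 + 1)) - catC ^ (0 + 1) := by
    rw [serA_two]; ring
  rw [h1]
  simp only [map_add, map_sub, coeff_catC_pow]
  have e : 2 * (N + 3) = 2 * N + 6 := by ring
  simp only [e, Nat.add_assoc, Nat.reduceAdd]
  have := Nat.factorial_ne_zero N
  simp only [Nat.factorial_succ]
  push_cast
  field_simp
  ring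

/-! ### Counting insertion sequences through labels -/

/-- The effect on a profile `k` (see `prof`) of appending a new last entry of value `v`. -/
def ins (k : ℕ → ℕ) (v m : ℕ) : ℕ := if m ≤ v then k m else k (m - 1) + v

/-- The number of sequences of `s` successive insertions, beginning at a permutation of `Fin n` with
profile `k` and `o` occurrences of 123, that lead to exactly two occurrences. -/
def cnt : ℕ → ℕ → ℕ → (ℕ → ℕ) → ℚ
  | 0, _, o, _ => if o = 2 then 1 else 0
  | s + 1, n, o, k => ∑ v ∈ Finset.range (n + 1), cnt s (n + 1) (o + k v) (ins k v)

/-- The profile `k` on `{0, …, n}` is `0` on the first `a` arguments, `1` on the next `b`, `2` on the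
next `c`, and at least `3` afterwards. -/
structure HasLabel (k : ℕ → ℕ) (n a b c : ℕ) : Prop where
  le : a + b + c ≤ n + 1
  val : ∀ m ≤ n, (m < a → k m = 0) ∧ (a ≤ m → m < a + b → k m = 1) ∧
    (a + b ≤ m → m < a + b + c → k m = 2) ∧ (a + b + c ≤ m → 3 ≤ k m)

section
variable {k : ℕ → ℕ} {n a b c : ℕ}

lemma HasLabel.ins_zero (h : HasLabel k n a b c) (ha : 0 < a) :
    HasLabel (ins k 0) (n + 1) (a + 1) b c := by
  have hle := h.le
  refine ⟨by omega, fun m hm => ?_⟩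
  have h1 := h.val (m - 1) (by omega)
  have h2 := h.val 0 (by omega)
  unfold ins
  split_ifs with hmv
  · obtain rfl : m = 0 := by omega
    omega
  · omega

lemma HasLabel.ins_one (h : HasLabel k n (a + 2) b c) :
    HasLabel (ins k 1) (n + 1) 2 (a + 1) b := by
  have hle := h.le
  refine ⟨by omega, fun m hm => ?_⟩
  have h1 := h.val (m - 1) (by omega)
  unfold ins
  split_ifs with hmv
  · have h2 := h.val m (by omega)
    omega
  · omega

lemma HasLabel.ins_two_add (h : HasLabel k n (a + 2) b c) {v : ℕ} (hv : v < a) :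
    HasLabel (ins k (v + 2)) (n + 1) (v + 3) 0 (if v = 0 then a else 0) := by
  have hle := h.le
  refine ⟨by split_ifs <;> omega, fun m hm => ?_⟩
  have h1 := h.val (m - 1) (by omega)
  unfold ins
  by_cases hmv : m ≤ v + 2
  · have h2 := h.val m (by omega)
    rw [if_pos hmv]
    split_ifs <;> omega
  · rw [if_neg hmv]
    split_ifs <;> omega

lemma HasLabel.ins_mid (h : HasLabel k n (a + 2) b c) {t : ℕ} (ht : t < b) :
    HasLabel (ins k (a + 2 + t)) (n + 1) (a + 2) (t + 1) 0 := by
  have hle := h.le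
  refine ⟨by omega, fun m hm => ?_⟩
  have h1 := h.val (m - 1) (by omega)
  unfold ins
  split_ifs with hmv
  · have h2 := h.val m (by omega)
    omega
  · omega

lemma HasLabel.ins_high (h : HasLabel k n (a + 2) b c) {t : ℕ} (ht : t < c) :
    HasLabel (ins k (a + 2 + b + t)) (n + 1) (a + 2) b (t + 1) := by
  have hle := h.le
  refine ⟨by omega, fun m hm => ?_⟩
  have h1 := h.val (m - 1) (by omega)
  unfold ins
  split_ifs with hmv
  · have h2 := h.val m (by omega)
    omega
  · omega
end

lemma cnt_eq_zero (s n o : ℕ) (k : ℕ → ℕ) (ho : 3 ≤ o) : cnt s n o k = 0 := by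
  induction s generalizing n o k with
  | zero => simp [cnt]; omega
  | succ s ih => exact Finset.sum_eq_zero fun v _ => ih _ _ _ (by omega)

/-- The possible values of the new entry, grouped by the number of occurrences they create. The values
with profile at least `3` contribute nothing. -/
lemma cnt_succ_of_hasLabel {k : ℕ → ℕ} {n a b c : ℕ} (h : HasLabel k n (a + 2) b c) (s o : ℕ) :
    cnt (s + 1) n o k =
      cnt s (n + 1) o (ins k 0) + cnt s (n + 1) o (ins k 1)
        + ∑ v ∈ Finset.range a, cnt s (n + 1) o (ins k (v + 2))
        + ∑ t ∈ Finset.range b, cnt s (n + 1) (o + 1) (ins k (a + 2 + t))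
        + ∑ t ∈ Finset.range c, cnt s (n + 1) (o + 2) (ins k (a + 2 + b + t)) := by
  obtain ⟨d, hd⟩ := Nat.exists_eq_add_of_le h.le
  have hv := h.val
  rw [cnt, hd, Finset.sum_range_add, Finset.sum_range_add, Finset.sum_range_add, ← hd]
  have h4 : ∑ x ∈ Finset.range d, cnt s (n + 1) (o + k (a + 2 + b + c + x))
      (ins k (a + 2 + b + c + x)) = 0 :=
    Finset.sum_eq_zero fun x hx => cnt_eq_zero _ _ _ _ (by
      have := Finset.mem_range.1 hx
      have := (hv (a + 2 + b + c + x) (by omega)).2.2.2 (by omega)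
      omega)
  rw [h4, add_zero]
  congr 1
  · congr 1
    · rw [Finset.sum_range_succ', Finset.sum_range_succ', (hv 0 (by omega)).1 (by omega),
        (hv (0 + 1) (by omega)).1 (by omega)]
      have : ∀ x ∈ Finset.range a, cnt s (n + 1) (o + k (x + 1 + 1)) (ins k (x + 1 + 1)) =
          cnt s (n + 1) o (ins k (x + 2)) := fun x hx => by
        have := Finset.mem_range.1 hx
        rw [(hv (x + 1 + 1) (by omega)).1 (by omega)]
        rfl
      rw [Finset.sum_congr rfl this]
      simp only [add_zero, zero_add]
      ring
    · refine Finset.sum_congr rfl fun t ht => ?_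
      have := Finset.mem_range.1 ht
      rw [(hv (a + 2 + t) (by omega)).2.1 (by omega) (by omega)]
  · refine Finset.sum_congr rfl fun t ht => ?_
    have := Finset.mem_range.1 ht
    rw [(hv (a + 2 + b + t) (by omega)).2.2.1 (by omega) (by omega)]

lemma cnt_two {k : ℕ → ℕ} {n a b c : ℕ} (s : ℕ) (h : HasLabel k n (a + 2) b c) :
    cnt s n 2 k = coeff s (F0 (a + 2)) := by
  induction s generalizing k n a b c with
  | zero => simp only [cnt, F0, coeff_zero_catC_pow]; simp
  | succ s ih =>
    rw [cnt_succ_of_hasLabel h, ih (a := a + 1) (h.ins_zero (by omega)), ih (a := 0) h.ins_one,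
      Finset.sum_congr rfl fun v hv => ih (a := v + 1) (h.ins_two_add (Finset.mem_range.1 hv)),
      Finset.sum_eq_zero fun t _ => cnt_eq_zero s (n + 1) (2 + 1) _ (by omega),
      Finset.sum_eq_zero fun t _ => cnt_eq_zero s (n + 1) (2 + 2) _ (by omega)]
    have r := congrArg (coeff (s + 1)) (F0_rec a)
    rw [map_add, coeff_succ_X_mul] at r
    rw [r]
    simp only [map_add, map_sum, coeff_one, add_zero, Nat.succ_ne_zero,
      if_false, zero_add, Nat.add_assoc, Nat.reduceAdd]

lemma cnt_one {k : ℕ → ℕ} {n a b c : ℕ} (s : ℕ) (h : HasLabel k n (a + 2) b c) :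
    cnt s n 1 k = coeff s (serG (a + 2)) + b * coeff s (serH (a + 2)) := by
  induction s generalizing k n a b c with
  | zero =>
    rw [serG_rec, serH_rec (a + 2), coeff_zero_X_mul, coeff_zero_X_mul]
    simp [cnt]
  | succ s ih =>
    rw [cnt_succ_of_hasLabel h, ih (a := a + 1) (h.ins_zero (by omega)), ih (a := 0) h.ins_one,
      Finset.sum_congr rfl fun v hv => ih (a := v + 1) (h.ins_two_add (Finset.mem_range.1 hv)),
      Finset.sum_congr rfl fun t ht => cnt_two s (h.ins_mid (Finset.mem_range.1 ht)),
      Finset.sum_eq_zero fun t _ => cnt_eq_zero s (n + 1) (1 + 2) _ (by omega)]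
    have rG := congrArg (coeff (s + 1)) (serG_rec a)
    have rH := congrArg (coeff (s + 1)) (serH_rec (a + 2))
    rw [coeff_succ_X_mul] at rG
    rw [coeff_succ_X_mul] at rH
    rw [rG, rH]
    simp only [map_add, coeff_natCast_mul, add_mul, one_mul, map_sum, Finset.sum_const, Finset.card_range, nsmul_eq_mul,
      Nat.cast_zero, zero_mul, add_zero, zero_add, Nat.cast_add, Nat.cast_one, Nat.add_assoc,
      Nat.reduceAdd]
    ring

lemma cnt_zero {k : ℕ → ℕ} {n a b c : ℕ} (s : ℕ) (h : HasLabel k n (a + 2) b c) :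
    cnt s n 0 k = coeff s (serA (a + 2)) + b * coeff s (serB (a + 2))
      + b * (b + 1) / 2 * coeff s (serD (a + 2)) + c * coeff s (serH (a + 2)) := by
  induction s generalizing k n a b c with
  | zero =>
    rw [serA_rec, serB_rec (a + 2), serD_rec (a + 2), serH_rec (a + 2), coeff_zero_X_mul,
      coeff_zero_X_mul, coeff_zero_X_mul, coeff_zero_X_mul]
    simp [cnt]
  | succ s ih =>
    rw [cnt_succ_of_hasLabel h, ih (a := a + 1) (h.ins_zero (by omega)), ih (a := 0) h.ins_one,
      Finset.sum_congr rfl fun v hv => ih (a := v + 1) (h.ins_two_add (Finset.mem_range.1 hv)),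
      Finset.sum_congr rfl fun t ht => cnt_one s (h.ins_mid (Finset.mem_range.1 ht)),
      Finset.sum_congr rfl fun t ht => cnt_two s (h.ins_high (Finset.mem_range.1 ht))]
    have rA := congrArg (coeff (s + 1)) (serA_rec a)
    have rB := congrArg (coeff (s + 1)) (serB_rec (a + 2))
    have rD := congrArg (coeff (s + 1)) (serD_rec (a + 2))
    have rH := congrArg (coeff (s + 1)) (serH_rec (a + 2))
    have tri : ∑ t ∈ Finset.range b, (t : ℚ) = b * (b - 1) / 2 := by
      clear h rA rB rD rH
      induction b with
      | zero => simp
      | succ b ih =>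
        rw [Finset.sum_range_succ, ih]
        push_cast
        ring
    have hs : ∑ v ∈ Finset.range a, ((if v = 0 then a else 0 : ℕ) : ℚ) *
        coeff s (serH (v + 1 + 2)) = a * coeff s (serH 3) := by
      cases a with
      | zero => simp
      | succ a =>
        rw [Finset.sum_range_succ']
        simp
    rw [coeff_succ_X_mul, map_add, map_add, map_add, map_add, coeff_C_mul] at rA
    rw [coeff_succ_X_mul] at rB rD rH
    rw [rA, rB, rD, rH]
    simp only [map_add, coeff_natCast_mul, add_mul, one_mul, map_sum, Finset.sum_add_distrib, hs, ← Finset.sum_mul, tri,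
      Finset.sum_const, Finset.card_range, nsmul_eq_mul, Nat.cast_zero, zero_mul, zero_div,
      add_zero, zero_add, Nat.cast_add, Nat.cast_one, Nat.add_assoc, Nat.reduceAdd]
    ring

/-! ### Appending a last entry to a permutation -/

/-- The number of occurrences of 123 in `π`, as an explicit sum. -/
def occ {n : ℕ} (π : Equiv.Perm (Fin n)) : ℕ :=
  ∑ i, ∑ j, ∑ l, if (i < j ∧ j < l) ∧ π i < π j ∧ π j < π l then 1 else 0

/-- The profile of `π`: the number of pairs `i < j` with `π i < π j < m`, as a function of `m`. It is
the number of occurrences of 123 created by appending a last entry of value `m`. -/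
def prof {n : ℕ} (π : Equiv.Perm (Fin n)) (m : ℕ) : ℕ :=
  ∑ i, ∑ j, if i < j ∧ π i < π j ∧ (π j : ℕ) < m then 1 else 0

lemma numOcc_eq_occ {n : ℕ} (π : Equiv.Perm (Fin n)) : numOcc (Equiv.refl (Fin 3)) π = occ π := by
  have e : {f : Fin 3 → Fin n // StrictMono f ∧
      ∀ a b : Fin 3, π (f a) < π (f b) ↔ Equiv.refl (Fin 3) a < Equiv.refl (Fin 3) b} ≃
      {t : Fin n × Fin n × Fin n // (t.1 < t.2.1 ∧ t.2.1 < t.2.2) ∧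
        π t.1 < π t.2.1 ∧ π t.2.1 < π t.2.2} :=
    { toFun := fun f => ⟨(f.1 0, f.1 1, f.1 2), ⟨f.2.1 (by decide), f.2.1 (by decide)⟩,
        (f.2.2 0 1).2 (by decide), (f.2.2 1 2).2 (by decide)⟩
      invFun := fun t => ⟨![t.1.1, t.1.2.1, t.1.2.2], by
        obtain ⟨⟨i, j, l⟩, ⟨h1, h2⟩, h3, h4⟩ := t
        simp only at h1 h2 h3 h4
        refine ⟨Fin.strictMono_iff_lt_succ.2 fun x => ?_, fun x y => ?_⟩
        · fin_cases x
          · exact h1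
          · exact h2
        · have h5 := h3.trans h4
          fin_cases x <;> fin_cases y <;>
            simp [h3, h4, h5, h3.le, h4.le, h5.le]⟩
      left_inv := fun f => by
        ext x; fin_cases x <;> rfl
      right_inv := fun t => rfl }
  rw [numOcc, Nat.card_congr e, Nat.card_eq_fintype_card, Fintype.card_subtype,
    Finset.card_filter, Fintype.sum_prod_type]
  simp only [Fintype.sum_prod_type, occ]

/-- The underlying function of `app`. -/
def appFun {n : ℕ} (π : Equiv.Perm (Fin n)) (v : Fin (n + 1)) : Fin (n + 1) → Fin (n + 1) :=
  Fin.lastCases v fun i => v.succAbove (π i)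

lemma appFun_injective {n : ℕ} (π : Equiv.Perm (Fin n)) (v : Fin (n + 1)) :
    Function.Injective (appFun π v) := by
  intro i j
  induction i using Fin.lastCases with
  | last =>
    induction j using Fin.lastCases with
    | last => simp
    | cast j => simp [appFun, (Fin.succAbove_ne _ _).symm]
  | cast i =>
    induction j using Fin.lastCases with
    | last => simp [appFun, Fin.succAbove_ne]
    | cast j => simp [appFun]

/-- The permutation obtained from `π` by appending a last entry of value `v` and raising by one the
entries that are at least `v`. -/
noncomputable def app {n : ℕ} (π : Equiv.Perm (Fin n)) (v : Fin (n + 1)) :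
    Equiv.Perm (Fin (n + 1)) :=
  Equiv.ofBijective (appFun π v) (Finite.injective_iff_bijective.1 (appFun_injective π v))

@[simp] lemma app_last {n : ℕ} (π : Equiv.Perm (Fin n)) (v : Fin (n + 1)) :
    app π v (Fin.last n) = v := by simp [app, appFun]

@[simp] lemma app_castSucc {n : ℕ} (π : Equiv.Perm (Fin n)) (v : Fin (n + 1)) (i : Fin n) :
    app π v i.castSucc = v.succAbove (π i) := by simp [app, appFun]

lemma app_bijective (n : ℕ) : Function.Bijective
    fun x : Equiv.Perm (Fin n) × Fin (n + 1) => app x.1 x.2 := by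
  rw [Fintype.bijective_iff_injective_and_card]
  constructor
  · rintro ⟨π, v⟩ ⟨σ, w⟩ h
    simp only at h
    have hv : v = w := by simpa using DFunLike.congr_fun h (Fin.last n)
    subst hv
    congr 1
    ext i
    have := DFunLike.congr_fun h i.castSucc
    simp only [app_castSucc] at this
    rw [Fin.succAbove_right_injective this]
  · simp [Fintype.card_perm, Nat.factorial_succ, mul_comm]

lemma occ_app {n : ℕ} (π : Equiv.Perm (Fin n)) (v : Fin (n + 1)) :
    occ (app π v) = occ π + prof π v := by
  have h : ∀ i : Fin n, ¬ Fin.last n < i.castSucc := fun i => not_lt.2 (Fin.le_last _)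
  have h2 : ∀ i : Fin n, v.succAbove (π i) < v ↔ (π i : ℕ) < v := fun i =>
    Fin.succAbove_lt_iff_castSucc_lt v (π i)
  simp only [occ, prof, Fin.sum_univ_castSucc, Finset.sum_add_distrib, h, h2, app_last,
    app_castSucc, Fin.succAbove_lt_succAbove_iff, Fin.castSucc_lt_castSucc_iff,
    Fin.castSucc_lt_last, lt_self_iff_false, and_false, false_and, if_false,
    Finset.sum_const_zero, add_zero, and_true]

/-- For `m ≤ v` the pairs below `m` are unaffected. For `m > v` the old pairs below `m` are those of `π`
below `m - 1`, and each of the `v` entries smaller than `v` forms a new pair with the last entry. -/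
lemma prof_app {n : ℕ} (π : Equiv.Perm (Fin n)) (v : Fin (n + 1)) :
    prof (app π v) = ins (prof π) v := by
  funext m
  have h : ∀ i : Fin n, ¬ Fin.last n < i.castSucc := fun i => not_lt.2 (Fin.le_last _)
  have h2 : ∀ i : Fin n, v.succAbove (π i) < v ↔ (π i : ℕ) < v := fun i =>
    Fin.succAbove_lt_iff_castSucc_lt v (π i)
  have h3 : ∀ x : Fin n, (v.succAbove x : ℕ) = if (x : ℕ) < v then (x : ℕ) else x + 1 := by
    intro x
    simp only [Fin.succAbove, Fin.lt_def, Fin.val_castSucc]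
    split_ifs <;> simp
  have hs : ∑ i, (if (π i : ℕ) < v then 1 else 0) = (v : ℕ) := by
    rw [Equiv.sum_comp π fun x => if (x : ℕ) < v then 1 else 0,
      Fin.sum_univ_eq_sum_range fun x => if x < (v : ℕ) then 1 else 0, ← Finset.card_filter]
    have : Finset.filter (fun x => x < (v : ℕ)) (Finset.range n) = Finset.range v := by
      ext x
      simp only [Finset.mem_filter, Finset.mem_range]
      omega
    rw [this, Finset.card_range]
  simp only [prof, Fin.sum_univ_castSucc, Finset.sum_add_distrib, h, h2, app_last,
    app_castSucc, Fin.succAbove_lt_succAbove_iff, Fin.castSucc_lt_castSucc_iff,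
    Fin.castSucc_lt_last, lt_self_iff_false, and_false, false_and, if_false,
    Finset.sum_const_zero, add_zero, true_and, h3, ins]
  split_ifs with hm
  · have h4 : ¬ (v : ℕ) < m := by omega
    simp only [h4, and_false, if_false, Finset.sum_const_zero, add_zero]
    have h5 : ∀ x : ℕ, (if x < v then x else x + 1) < m ↔ x < m := by
      intro x; split_ifs <;> omega
    simp only [h5]
  · have h4 : (v : ℕ) < m := by omega
    have h5 : ∀ x : ℕ, (if x < v then x else x + 1) < m ↔ x < m - 1 := by
      intro x; split_ifs <;> omega
    simp only [h4, h5, and_true, hs]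

/-- Every permutation of `Fin (n + s)` arises from exactly one permutation of `Fin n` by `s`
successive insertions. -/
lemma sum_cnt (s n : ℕ) :
    ∑ π : Equiv.Perm (Fin (n + s)), (if occ π = 2 then 1 else 0 : ℚ) =
      ∑ π : Equiv.Perm (Fin n), cnt s n (occ π) (prof π) := by
  induction s generalizing n with
  | zero => simp [cnt]
  | succ s ih =>
    have e : n + (s + 1) = (n + 1) + s := by ring
    rw [e, ih, ← (app_bijective n).sum_comp, Fintype.sum_prod_type]
    refine Finset.sum_congr rfl fun π _ => ?_
    rw [cnt, Finset.sum_range]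
    simp only [occ_app, prof_app]

theorem count_two_occ_123 (n : ℕ) (hn : 4 ≤ n) :
    (Nat.card {π : Equiv.Perm (Fin n) // numOcc (Equiv.refl (Fin 3)) π = 2} : ℚ) =
      (59 * (n : ℚ) ^ 2 + 117 * (n : ℚ) + 100) * (Nat.factorial (2 * n - 2) : ℚ) /
        ((Nat.factorial (n + 5) : ℚ) * (Nat.factorial (n - 4) : ℚ)) := by
  obtain ⟨N, rfl⟩ := Nat.exists_eq_add_of_le' hn
  have h1 : (Nat.card {π : Equiv.Perm (Fin (N + 4)) // numOcc (Equiv.refl (Fin 3)) π = 2} : ℚ) =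
      cnt (N + 3) 1 0 (ins (fun _ => 0) 0) := by
    have h := sum_cnt (N + 4) 0
    rw [Nat.zero_add] at h
    simp only [numOcc_eq_occ]
    rw [Nat.card_eq_fintype_card, Fintype.card_subtype, Finset.card_filter]
    push_cast
    rw [h, Fintype.sum_unique, cnt]
    simp [occ]
    congr 1
  -- The permutation of a single element has the zero profile on `{0, 1}`.
  have h2 : HasLabel (ins (fun _ => 0) 0) 1 (0 + 2) 0 0 :=
    ⟨by simp, fun m hm => by simp [ins]; omega⟩
  rw [h1, cnt_zero _ h2]
  have e1 : 2 * (N + 4) - 2 = 2 * N + 6 := by omega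
  have e2 : N + 4 + 5 = N + 9 := by omega
  rw [e1, e2, Nat.add_sub_cancel, zero_add, coeff_serA_two]
  push_cast
  ring
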